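/- Let m, n be positive integers with m ≤ n, let r ≥ 1, let ξ ∈ S_r be a permutation of {0,…,r−1}, and let r_1,…,r_N be the sizes of the orbits of ξ on {0,…,r−1} (fixed points counted as orbits of size 1, so r_1+⋯+r_N = r). Then Σ_{η ∈ S_r} m^{cyc(η)} n^{cyc(ξη)} = (1/Λ_{m,n}) · ∫_{[0,∞)^m} Δ(q)² ∏_{k=1}^{m} q_k^{n−m} e^{−q_k} · ∏_{i=1}^{N} ( Σ_{j=1}^{m} q_j^{r_i} ) dq. -/

import Mathlib

open Finset MeasureTheory

/-- Number of cycles of a permutation, counting fixed points as cycles of length 1. -/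
def cyc {r : ℕ} (σ : Equiv.Perm (Fin r)) : ℕ :=
  σ.cycleType.card + (Finset.univ.filter fun x => σ x = x).card

/-- The multiset of the sizes of the orbits of a permutation `ξ` (fixed points
counted as orbits of size 1): its cycle type together with a `1` for each fixed point. -/
def orbitSizes {r : ℕ} (ξ : Equiv.Perm (Fin r)) : Multiset ℕ :=
  ξ.cycleType + Multiset.replicate ((Finset.univ.filter fun x => ξ x = x).card) 1

/-- The Vandermonde determinant `Δ(q) = ∏_{i<j} (q_j - q_i)`. -/
def vandermonde {m : ℕ} (q : Fin m → ℝ) : ℝ :=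
  ∏ p ∈ Finset.univ.filter (fun p : Fin m × Fin m => p.1 < p.2), (q p.2 - q p.1)

/-- The positive orthant `[0,∞)^m`. -/
def orthant (m : ℕ) : Set (Fin m → ℝ) := {q | ∀ k, 0 ≤ q k}

/-- `Λ_{m,n} = ∫_{[0,∞)^m} Δ(q)² ∏_k q_k^{n-m} e^{-q_k} dq`. -/
noncomputable def Lam (m n : ℕ) : ℝ :=
  ∫ q in orthant m, (vandermonde q) ^ 2 *
    ∏ k : Fin m, (q k ^ (n - m) * Real.exp (-(q k)))

/-!
Both sides satisfy the same recursion when a root is removed from the ground set of the backbone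
`ξ`. On the ladder side, every `η` on `Option α` is uniquely `swap none y * optionCongr η'`, and
deleting the root from `η` and from `ξ * η` changes their numbers of cycles in a way that depends
only on `y`. On the integral side, the product of power sums is a sum over the colourings of the
ground set that are constant on the cycles of `ξ`. It equals `∑ j, q j * H j`, where `H j` sums
over the colourings giving the root the colour `j`. Integrate by parts along the vector field
`q j * H j`: its divergence and the logarithmic derivative of `Δ(q)²` along it are the sums, over
`j = l` and over `j ≠ l`, of the divided differences of `q j * H j` and `q l * H l`. Together they
give the terms of the recursion, and the exponent `n - m` adds what is needed to replace `m` by `n`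
where a cycle of `ξ * η` closes at the root.
-/

open Equiv
open Function (update)

section RemoveNone

variable {α κ R : Type*}

theorem comp_swap_eq_self [DecidableEq α] {f : α → κ} {x y : α} (hf : f x = f y) :
    f ∘ swap x y = f := by
  rw [comp_swap_eq_update, hf, Function.update_eq_self, ← hf, Function.update_eq_self]

theorem update_elim'_none [DecidableEq α] (c c' : κ) (h : α → κ) :
    update (Option.elim' c h) none c' = Option.elim' c' h := by
  ext o; cases o <;> simp

theorem elim'_right_injective (c : κ) :
    Function.Injective (Option.elim' c : (α → κ) → Option α → κ) :=
  fun _ _ h => congrArg (· ∘ some) h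

theorem elim'_comp_eq_self_iff (τ : Perm (Option α)) (c : κ) (h : α → κ) :
    Option.elim' c h ∘ τ = Option.elim' c h ↔
      Option.elim' c h (τ none) = c ∧ h ∘ removeNone τ = h := by
  classical
  have elim'_comp_optionCongr :
      Option.elim' c h ∘ (removeNone τ).optionCongr = Option.elim' c (h ∘ removeNone τ) := by
    ext o; cases o <;> rfl
  have elim'_comp (hc : Option.elim' c h (τ none) = c) :
      Option.elim' c h ∘ τ = Option.elim' c (h ∘ removeNone τ) := by
    rw [← elim'_comp_optionCongr, map_equiv_removeNone, Perm.coe_mul, ← Function.comp_assoc,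
      comp_swap_eq_self (by simpa using hc.symm)]
  constructor
  · intro hτ
    have hc : Option.elim' c h (τ none) = c := congrFun hτ none
    rw [elim'_comp hc] at hτ
    exact ⟨hc, congrArg (· ∘ some) hτ⟩
  · rintro ⟨hc, hτ⟩
    rw [elim'_comp hc, hτ]

theorem removeNone_mul_optionCongr (τ : Perm (Option α)) (η : Perm α) :
    removeNone (τ * η.optionCongr) = removeNone τ * η := by
  classical
  apply optionCongr_injective
  have optionCongr_mul : (removeNone τ * η).optionCongr =
      (removeNone τ).optionCongr * η.optionCongr := optionCongr_trans η (removeNone τ)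
  simp [optionCongr_mul, mul_assoc]

theorem removeNone_swap_none [DecidableEq α] (y : Option α) :
    removeNone (swap none y) = (1 : Perm α) :=
  optionCongr_injective (by simp)

theorem removeNone_mul_swap_symm_none [DecidableEq α] (ξ : Perm (Option α)) :
    removeNone (ξ * swap none (ξ.symm none)) = removeNone ξ := by
  have mul_swap : ξ * swap none (ξ.symm none) = (removeNone ξ).optionCongr := by
    rw [mul_swap_eq_swap_mul, map_equiv_removeNone, apply_symm_apply, swap_comm]
  rw [mul_swap, removeNone_optionCongr]

theorem prod_elim' [Fintype α] [CommMonoid R] (w : κ → R) (c : κ) (h : α → κ) :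
    ∏ o, w (Option.elim' c h o) = w c * ∏ a, w (h a) := by
  simp only [Fintype.prod_option, Option.elim'_none, Option.elim'_some]

theorem elim'_comp_some {f : Option α → κ} {c : κ} (hf : f none = c) :
    Option.elim' c (f ∘ some) = f := by
  ext o; cases o <;> simp [hf]

end RemoveNone

section Colourings

variable {α β κ ν R : Type*} [Fintype α] [DecidableEq α] [Fintype β] [DecidableEq β]
  [Fintype κ] [DecidableEq κ] [Fintype ν] [DecidableEq ν] [CommSemiring R]

/-- The colourings of `α` by `κ` that are constant on the cycles of `ξ`. -/
def invariantColourings (κ : Type*) [Fintype κ] [DecidableEq κ] (ξ : Perm α) :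
    Finset (α → κ) :=
  univ.filter fun f => f ∘ ξ = f

theorem mem_invariantColourings {ξ : Perm α} {f : α → κ} :
    f ∈ invariantColourings κ ξ ↔ f ∘ ξ = f := by
  simp [invariantColourings]

theorem invariantColourings_of_isEmpty [IsEmpty α] (ξ : Perm α) :
    invariantColourings κ ξ = univ :=
  filter_true_of_mem fun _ _ => Subsingleton.elim _ _

/-- The product over the cycles of `ξ` of the power sums `∑ c, w c ^ length`, expanded as a sum
over invariant colourings. -/
def colourSum (w : κ → R) (ξ : Perm α) : R :=
  ∑ f ∈ invariantColourings κ ξ, ∏ a, w (f a)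

theorem colourSum_one (ξ : Perm α) :
    colourSum (1 : κ → R) ξ = (invariantColourings κ ξ).card := by
  simp [colourSum]

theorem map_colourSum {S F : Type*} [CommSemiring S] [FunLike F R S] [RingHomClass F R S]
    (φ : F) (w : κ → R) (ξ : Perm α) : φ (colourSum w ξ) = colourSum (φ ∘ w) ξ := by
  simp [colourSum]

theorem colourSum_permCongr (w : κ → R) (e : α ≃ β) (ξ : Perm α) :
    colourSum w (e.permCongr ξ) = colourSum w ξ := by
  refine sum_equiv (e.arrowCongr (Equiv.refl κ)).symm (fun f => ?_) fun f _ =>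
    (e.prod_comp fun b => w (f b)).symm
  simp only [mem_invariantColourings, funext_iff]
  exact e.symm.forall_congr (by simp)

theorem card_invariantColourings_permCongr (e : α ≃ β) (ξ : Perm α) :
    (invariantColourings κ (e.permCongr ξ)).card = (invariantColourings κ ξ).card := by
  simpa only [colourSum_one, Nat.cast_id] using colourSum_permCongr (1 : κ → ℕ) e ξ

/-- The sum over the `ξ`-invariant colourings of `Option α` that give the root `none` the colour
`c`; the root carries no weight. -/
def rootedColourSum (w : κ → R) (ξ : Perm (Option α)) (c : κ) : R :=
  ∑ h : α → κ with Option.elim' c h ∘ ξ = Option.elim' c h, ∏ a, w (h a)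

theorem colourSum_option (w : κ → R) (ξ : Perm (Option α)) :
    colourSum w ξ = ∑ c, w c * rootedColourSum w ξ c := by
  have elim'_eq (p : κ × (α → κ)) : piOptionEquivProd.symm p = Option.elim' p.1 p.2 := by
    ext o; cases o <;> rfl
  simp only [colourSum, invariantColourings, rootedColourSum, sum_filter, mul_sum]
  rw [← piOptionEquivProd.symm.sum_comp, Fintype.sum_prod_type]
  simp only [elim'_eq, Fintype.prod_option, Option.elim'_none, Option.elim'_some, mul_ite,
    mul_zero]

theorem sum_rootedColourSum (w : κ → R) (τ : Perm (Option α)) :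
    ∑ c, rootedColourSum w τ c =
      (if τ none = none then Fintype.card κ else 1) • colourSum w (removeNone τ) := by
  have sum_root (h : α → κ) (x : R) : ∑ c, (if Option.elim' c h (τ none) = c then x else 0) =
      (if τ none = none then Fintype.card κ else 1) • x := by
    cases τ none with
    | none => simp
    | some a => exact (Fintype.sum_ite_eq (h a) fun _ => x).trans (one_smul ℕ x).symm
  simp only [rootedColourSum, colourSum, invariantColourings, elim'_comp_eq_self_iff, sum_filter,
    ite_and]
  rw [sum_comm, smul_sum]
  simp only [sum_root]

theorem card_invariantColourings_option (τ : Perm (Option α)) :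
    (invariantColourings κ τ).card =
      (if τ none = none then Fintype.card κ else 1) *
        (invariantColourings κ (removeNone τ)).card := by
  have colourSum_eq := colourSum_option (1 : κ → ℕ) τ
  simpa only [Pi.one_apply, one_mul, sum_rootedColourSum, smul_eq_mul, colourSum_one, Nat.cast_id]
    using colourSum_eq

/-- The generating function `P(m, n)` of ladder diagrams with backbone `ξ`, for `m` and `n` the
numbers of colours in `κ` and `ν`: the factors `m ^ cyc η` and `n ^ cyc (ξ * η)` count the
colourings invariant under `η` and `ξ * η`. -/
def ladderCount (κ ν : Type*) [Fintype κ] [DecidableEq κ] [Fintype ν] [DecidableEq ν]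
    (ξ : Perm α) : ℕ :=
  ∑ η : Perm α, (invariantColourings κ η).card * (invariantColourings ν (ξ * η)).card

theorem ladderCount_permCongr (e : α ≃ β) (ξ : Perm α) :
    ladderCount κ ν (e.permCongr ξ) = ladderCount κ ν ξ := by
  refine (e.permCongr.sum_comp _).symm.trans (sum_congr rfl fun η _ => ?_)
  simp only [← permCongr_mul, card_invariantColourings_permCongr]

theorem ladderCount_option (ξ : Perm (Option α)) :
    ladderCount κ ν ξ = ∑ y, (if y = none then Fintype.card κ else 1) *
      (if ξ y = none then Fintype.card ν else 1) *
        ladderCount κ ν (removeNone (ξ * swap none y)) := by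
  simp only [ladderCount]
  rw [← Perm.decomposeOption.symm.sum_comp, Fintype.sum_prod_type]
  refine sum_congr rfl fun y _ => ?_
  rw [mul_sum]
  refine sum_congr rfl fun η _ => ?_
  rw [Perm.decomposeOption_symm_apply, ← mul_assoc ξ, card_invariantColourings_option,
    card_invariantColourings_option (ξ * _ * _), removeNone_mul_optionCongr,
    removeNone_mul_optionCongr, removeNone_swap_none, one_mul]
  simp only [Perm.mul_apply, optionCongr_apply, Option.map_none, swap_apply_left]
  ring

/-- For `y ≠ none` these are the restrictions to `α` of the colourings invariant under
`ξ * swap none y` that give `none` the colour `j` and `y` the colour `l`. The condition is phrased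
so that `y = none` gives the `ξ`-invariant colourings with root colour `j`, and `j = l` gives those
that also colour `y` by `j`. -/
def splitColourings (ξ : Perm (Option α)) (j l : κ) (y : Option α) : Finset (α → κ) :=
  univ.filter fun h => Option.elim' l h y = l ∧
    Option.elim' j h ∘ ξ = update (Option.elim' l h) y j

theorem mem_splitColourings {ξ : Perm (Option α)} {j l : κ} {y : Option α} {h : α → κ} :
    h ∈ splitColourings ξ j l y ↔ Option.elim' l h y = l ∧
      Option.elim' j h ∘ ξ = update (Option.elim' l h) y j := by
  simp [splitColourings]

theorem mem_splitColourings_none {ξ : Perm (Option α)} {j l : κ} {h : α → κ} :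
    h ∈ splitColourings ξ j l none ↔ Option.elim' j h ∘ ξ = Option.elim' j h := by
  rw [mem_splitColourings, update_elim'_none, Option.elim'_none, eq_self, true_and]

theorem mem_splitColourings_self {ξ : Perm (Option α)} {j : κ} {y : Option α} {h : α → κ} :
    h ∈ splitColourings ξ j j y ↔
      Option.elim' j h y = j ∧ Option.elim' j h ∘ ξ = Option.elim' j h := by
  rw [mem_splitColourings]
  refine and_congr_right fun hy => ?_
  rw [Function.update_eq_self_iff.mpr hy.symm]

theorem mem_splitColourings_some {ξ : Perm (Option α)} {j l : κ} {a : α} {h : α → κ} :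
    h ∈ splitColourings ξ j l (some a) ↔
      h a = l ∧ Option.elim' j h ∘ (ξ * swap none (some a)) = Option.elim' j h := by
  rw [mem_splitColourings]
  refine and_congr_right fun hl => ?_
  have elim'_comp_swap : Option.elim' j h ∘ swap none (some a) =
      update (Option.elim' l h) (some a) j := by
    rw [comp_swap_eq_update, Option.elim'_none, Option.elim'_some, show h a = l from hl,
      Function.update_comm (by simp), update_elim'_none]
  rw [← elim'_comp_swap, Perm.coe_mul, ← Function.comp_assoc]
  exact (comp_symm_eq (swap none (some a)) _ _).symm

theorem mem_splitColourings_of_apply_eq_none {ξ : Perm (Option α)} {j l : κ} {y : Option α}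
    (hy : ξ y = none) {h : α → κ} :
    h ∈ splitColourings ξ j l y ↔ Option.elim' l h ∘ ξ = Option.elim' l h := by
  have elim'_comp : Option.elim' j h ∘ ξ = update (Option.elim' l h ∘ ξ) y j := by
    rw [← update_elim'_none l j, Function.update_comp_equiv, ξ.symm_apply_eq.mpr hy.symm]
  have elim'_apply : (Option.elim' l h ∘ ξ) y = l := by
    rw [Function.comp_apply, hy, Option.elim'_none]
  rw [mem_splitColourings, elim'_comp]
  constructor
  · rintro ⟨hl, hj⟩
    have hj := congrArg (fun f => update f y l) hj
    rwa [Function.update_idem, Function.update_idem,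
      (Function.update_eq_self_iff (f := Option.elim' l h ∘ ξ)).mpr elim'_apply.symm,
      (Function.update_eq_self_iff (f := Option.elim' l h)).mpr hl.symm] at hj
  · intro hl
    rw [hl] at elim'_apply ⊢
    exact ⟨elim'_apply, rfl⟩

theorem mem_splitColourings_iff_of_comp_eq {ξ : Perm (Option α)} {j l : κ} {y : Option α}
    (hy : ξ y ≠ none) {h h' : α → κ} (hh : Option.elim' j h' ∘ ξ = Option.elim' l h) :
    h ∈ splitColourings ξ j l y ↔ h' ∈ splitColourings ξ j l (ξ y) := by
  obtain ⟨b, hb⟩ := Option.ne_none_iff_exists'.mp hy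
  have colour_eq : Option.elim' l h y = h' b := by
    rw [← hh, Function.comp_apply, hb, Option.elim'_some]
  have update_eq : update (Option.elim' l h) y j = Option.elim' j (update h' b j) ∘ ξ := by
    rw [← hh, Option.elim'_update, Function.update_comp_equiv, ξ.symm_apply_eq.mpr hb.symm]
  rw [mem_splitColourings, mem_splitColourings, colour_eq, update_eq, hb, hh, ← Option.elim'_update,
    Option.elim'_some, ξ.surjective.injective_comp_right.eq_iff, (elim'_right_injective _).eq_iff,
    (elim'_right_injective _).eq_iff]

/-- The contribution of `y` to `dividedDifference`. -/
def splitColourSum (w : κ → R) (ξ : Perm (Option α)) (j l : κ) (y : Option α) : R :=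
  ∑ h ∈ splitColourings ξ j l y, ∏ a, w (h a)

theorem splitColourSum_none (w : κ → R) (ξ : Perm (Option α)) (j l : κ) :
    splitColourSum w ξ j l none = rootedColourSum w ξ j :=
  sum_congr (by ext h; simp [mem_splitColourings_none]) fun _ _ => rfl

theorem splitColourSum_of_apply_eq_none (w : κ → R) {ξ : Perm (Option α)} (j l : κ)
    {y : Option α} (hy : ξ y = none) : splitColourSum w ξ j l y = rootedColourSum w ξ l :=
  sum_congr (by ext h; simp [mem_splitColourings_of_apply_eq_none hy]) fun _ _ => rfl

theorem mul_splitColourSum_apply (w : κ → R) {ξ : Perm (Option α)} (j l : κ) {y : Option α}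
    (hy : ξ y ≠ none) : w l * splitColourSum w ξ j l y = w j * splitColourSum w ξ j l (ξ y) := by
  have shift_spec {h} (hh : h ∈ splitColourings ξ j l y) :
      Option.elim' j (Option.elim' l h ∘ ξ.symm ∘ some) ∘ ξ = Option.elim' l h := by
    have hne : ξ.symm none ≠ y := fun e => hy (ξ.symm_apply_eq.mp e).symm
    have root_eq : j = Option.elim' l h (ξ.symm none) := by
      simpa [hne] using congrFun (mem_splitColourings.mp hh).2 (ξ.symm none)
    exact (eq_comp_symm ξ _ _).mp (elim'_comp_some (f := Option.elim' l h ∘ ξ.symm) root_eq.symm)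
  have unshift_spec {h'} (hh : h' ∈ splitColourings ξ j l (ξ y)) :
      Option.elim' j h' ∘ ξ = Option.elim' l (Option.elim' j h' ∘ ξ ∘ some) := by
    have root_eq : Option.elim' j h' (ξ none) = l := by
      simpa [hy.symm] using congrFun (mem_splitColourings.mp hh).2 none
    exact (elim'_comp_some (f := Option.elim' j h' ∘ ξ) root_eq).symm
  simp only [splitColourSum, mul_sum, ← prod_elim']
  refine sum_bij' (fun h _ => Option.elim' l h ∘ ξ.symm ∘ some)
    (fun h' _ => Option.elim' j h' ∘ ξ ∘ some)
    (fun h hh => (mem_splitColourings_iff_of_comp_eq hy (shift_spec hh)).mp hh)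
    (fun h' hh => (mem_splitColourings_iff_of_comp_eq hy (unshift_spec hh)).mpr hh)
    (fun h hh => congrArg (· ∘ some) (shift_spec hh)) (fun h' hh => ?_) (fun h hh => ?_)
  · rw [← unshift_spec hh]
    ext a
    simp
  · exact Fintype.prod_equiv ξ _ _ fun o => congrArg w (congrFun (shift_spec hh) o).symm

theorem sum_splitColourSum (w : κ → R) (ξ : Perm (Option α)) (y : Option α) :
    ∑ j, ∑ l, splitColourSum w ξ j l y =
      (if y = none then Fintype.card κ else 1) •
        ∑ c, rootedColourSum w (ξ * swap none y) c := by
  cases y with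
  | none =>
    have mul_swap_none : ξ * swap none none = ξ := by rw [swap_self]; rfl
    simp only [splitColourSum_none, mul_swap_none, sum_const, card_univ, if_true, smul_sum]
  | some a =>
    rw [if_neg (Option.some_ne_none a), one_smul]
    refine sum_congr rfl fun j _ => ?_
    rw [rootedColourSum, ← sum_fiberwise _ fun h : α → κ => h a]
    refine sum_congr rfl fun l _ => sum_congr ?_ fun _ _ => rfl
    ext h
    simp only [mem_splitColourings_some, mem_filter, mem_univ, true_and, and_comm]

/-- The divided difference `(w j * H j - w l * H l) / (w j - w l)` of the rooted colour sums `H`,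
see `sub_mul_dividedDifference`, as a sum over colourings; for `j = l` it is the derivative, see
`pderiv_X_mul_rootedColourSum`. -/
def dividedDifference (w : κ → R) (ξ : Perm (Option α)) (j l : κ) : R :=
  ∑ y, splitColourSum w ξ j l y

theorem sum_dividedDifference (w : κ → R) (ξ : Perm (Option α)) :
    ∑ j, ∑ l, dividedDifference w ξ j l =
      ∑ y, (if y = none then Fintype.card κ else 1) •
        ∑ c, rootedColourSum w (ξ * swap none y) c := by
  simp only [← sum_splitColourSum, dividedDifference]
  rw [sum_comm_cycle]

theorem sum_dividedDifference_add (w : κ → R) (ξ : Perm (Option α)) (e : ℕ) :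
    ∑ j, ∑ l, dividedDifference w ξ j l + e • ∑ c, rootedColourSum w ξ c =
      ∑ y, ((if y = none then Fintype.card κ else 1) *
        if ξ y = none then Fintype.card κ + e else 1) •
          colourSum w (removeNone (ξ * swap none y)) := by
  have sum_root : ∑ c, rootedColourSum w ξ c =
      ∑ y, if ξ y = none then (if y = none then Fintype.card κ else 1) •
        colourSum w (removeNone (ξ * swap none y)) else 0 := by
    simp only [← ξ.eq_symm_apply, Fintype.sum_ite_eq']
    rw [removeNone_mul_swap_symm_none, sum_rootedColourSum]
    simp only [ξ.symm_apply_eq, eq_comm]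
  rw [sum_dividedDifference, sum_root, smul_sum, ← sum_add_distrib]
  refine sum_congr rfl fun y _ => ?_
  rw [sum_rootedColourSum, Perm.mul_apply, swap_apply_left]
  split_ifs <;> simp only [one_smul, one_mul, smul_smul, ← add_smul, smul_zero, add_zero] <;>
    congr 1 <;> ring

theorem sub_mul_dividedDifference {R : Type*} [CommRing R] (w : κ → R) (ξ : Perm (Option α))
    (j l : κ) : (w j - w l) * dividedDifference w ξ j l =
      w j * rootedColourSum w ξ j - w l * rootedColourSum w ξ l := by
  have shift (y : Option α) : w l * splitColourSum w ξ j l y =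
      (if ξ y = none then w l * rootedColourSum w ξ l else w j * splitColourSum w ξ j l (ξ y)) := by
    split_ifs with hy
    · rw [splitColourSum_of_apply_eq_none w j l hy]
    · exact mul_splitColourSum_apply w j l hy
  have mul_left : w j * dividedDifference w ξ j l =
      w j * rootedColourSum w ξ j + ∑ a, w j * splitColourSum w ξ j l (some a) := by
    rw [dividedDifference, mul_sum, Fintype.sum_option, splitColourSum_none]
  have mul_right : w l * dividedDifference w ξ j l =
      w l * rootedColourSum w ξ l + ∑ a, w j * splitColourSum w ξ j l (some a) := by
    rw [dividedDifference, mul_sum, sum_congr rfl fun y _ => shift y,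
      Equiv.sum_comp ξ fun y => if y = none then w l * rootedColourSum w ξ l else
        w j * splitColourSum w ξ j l y, Fintype.sum_option]
    simp only [if_true, reduceCtorEq, if_false]
  rw [sub_mul, mul_left, mul_right, add_sub_add_right_eq_sub]

end Colourings

section Algebra

open MvPolynomial

theorem derivation_prod_eq_prod_mul_sum {ι K A : Type*} [CommSemiring K] [CommSemiring A]
    [Algebra K A] (D : Derivation K A A) {s : Finset ι} {g k : ι → A}
    (hD : ∀ i ∈ s, D (g i) = g i * k i) : D (∏ i ∈ s, g i) = (∏ i ∈ s, g i) * ∑ i ∈ s, k i := by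
  classical
  induction s using Finset.induction_on with
  | empty => simp
  | insert i s hi ih =>
    rw [prod_insert hi, sum_insert hi, Derivation.leibniz, smul_eq_mul, smul_eq_mul,
      ih fun j hj => hD j (mem_insert_of_mem hj), hD i (mem_insert_self i s)]
    ring

theorem mkDerivation_apply_eq_sum {σ K : Type*} [Fintype σ] [CommSemiring K]
    (v : σ → MvPolynomial σ K) (p : MvPolynomial σ K) :
    mkDerivation K v p = ∑ j, v j * pderiv j p := by
  classical
  induction p using MvPolynomial.induction_on with
  | C a => simp
  | add p q hp hq => simp only [map_add, hp, hq, mul_add, sum_add_distrib]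
  | mul_X p k hp =>
    simp only [Derivation.leibniz, mkDerivation_X, hp, smul_eq_mul, mul_add, sum_add_distrib,
      pderiv_X, Pi.single_apply, mul_ite, mul_one, mul_zero, Fintype.sum_ite_eq, mul_sum]
    simp only [mul_comm, mul_left_comm]

theorem sum_sum_eq_sum_diag_add_sum_lt {κ M : Type*} [Fintype κ] [LinearOrder κ] [AddCommMonoid M]
    (K : κ → κ → M) : ∑ j, ∑ l, K j l = ∑ j, K j j +
      (∑ p : κ × κ with p.1 < p.2, K p.1 p.2 + ∑ p : κ × κ with p.1 < p.2, K p.2 p.1) := by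
  have trichotomy (j l : κ) : K j l = (if j = l then K j l else 0) +
      ((if j < l then K j l else 0) + if l < j then K j l else 0) := by
    rcases lt_trichotomy j l with h | rfl | h
    · simp [h, h.ne, h.not_gt]
    · simp
    · simp [h, h.ne', h.not_gt]
  simp only [sum_filter, Fintype.sum_prod_type]
  rw [sum_comm (f := fun j l => if j < l then K l j else 0)]
  simp only [← sum_add_distrib]
  refine sum_congr rfl fun j _ => ?_
  rw [sum_congr rfl fun l _ => trichotomy j l, sum_add_distrib, sum_add_distrib,
    Fintype.sum_ite_eq]

end Algebra

section LaguerreFunctional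

open MvPolynomial

variable {σ R : Type*} [Fintype σ] [CommSemiring R]

variable (σ R) in
/-- The moment functional of the weight `∏ k, exp (-x k)` on the positive orthant, given on
monomials by the factorials of the exponents. -/
noncomputable def laguerreFunctional : MvPolynomial σ R →ₗ[R] R :=
  (basisMonomials σ R).constr R fun a => ∏ k, ((a k).factorial : R)

theorem laguerreFunctional_monomial (a : σ →₀ ℕ) (c : R) :
    laguerreFunctional σ R (monomial a c) = c * ∏ k, ((a k).factorial : R) := by
  have monomial_eq_smul : monomial a c = c • basisMonomials σ R a := by
    simp [smul_monomial]
  rw [monomial_eq_smul, map_smul, laguerreFunctional, Module.Basis.constr_basis, smul_eq_mul]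

theorem prod_factorial_single_add (j : σ) (a : σ →₀ ℕ) :
    ∏ k, ((Finsupp.single j 1 + a : σ →₀ ℕ) k).factorial = (a j + 1) * ∏ k, (a k).factorial := by
  classical
  have factorial_eq (k : σ) : ((Finsupp.single j 1 + a : σ →₀ ℕ) k).factorial =
      (if j = k then a k + 1 else 1) * (a k).factorial := by
    split_ifs with h
    · rw [Finsupp.add_apply, h, Finsupp.single_eq_same, add_comm 1, Nat.factorial_succ]
    · rw [Finsupp.add_apply, Finsupp.single_eq_of_ne' h, zero_add, one_mul]
  simp only [factorial_eq, prod_mul_distrib, prod_ite_eq, mem_univ, if_true]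

theorem laguerreFunctional_pderiv_X_mul (j : σ) (p : MvPolynomial σ R) :
    laguerreFunctional σ R (pderiv j (X j * p)) = laguerreFunctional σ R (X j * p) := by
  induction p using MvPolynomial.induction_on' with
  | monomial a c =>
    have X_mul_monomial : X j * monomial a c = monomial (Finsupp.single j 1 + a) c := by
      rw [X, monomial_mul, one_mul]
    rw [X_mul_monomial, pderiv_monomial, laguerreFunctional_monomial, laguerreFunctional_monomial,
      ← Nat.cast_prod, ← Nat.cast_prod, prod_factorial_single_add, add_tsub_cancel_left,
      Finsupp.add_apply, Finsupp.single_eq_same]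
    push_cast
    ring
  | add p q hp hq => rw [mul_add, map_add, map_add, map_add, hp, hq]

end LaguerreFunctional

section LoopEquation

open MvPolynomial

theorem pderiv_X_mul_prod_X {α κ R : Type*} [Fintype α] [DecidableEq κ] [CommSemiring R] (j : κ)
    (h : α → κ) :
    pderiv j (X j * ∏ a, (X (h a) : MvPolynomial κ R)) =
      ∑ y, if Option.elim' j h y = j then ∏ a, X (h a) else 0 := by
  have X_mul_pderiv : ((X j : MvPolynomial κ R) • pderiv (R := R) j) (∏ a, X (h a)) =
      (∏ a, X (h a)) * ∑ a, if h a = j then 1 else 0 := by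
    refine derivation_prod_eq_prod_mul_sum _ fun a _ => ?_
    by_cases ha : h a = j <;> simp [pderiv_X, ha]
  rw [Derivation.smul_apply, smul_eq_mul] at X_mul_pderiv
  rw [pderiv_mul, pderiv_X_self, one_mul, X_mul_pderiv, Fintype.sum_option, mul_sum]
  refine congr_arg₂ _ (if_pos rfl).symm (sum_congr rfl fun a _ => mul_boole _ _)

variable {α κ R : Type*} [Fintype α] [DecidableEq α] [Fintype κ]

theorem pderiv_X_mul_rootedColourSum [CommSemiring R] [DecidableEq κ] (ξ : Perm (Option α))
    (j : κ) :
    pderiv j (X j * rootedColourSum X ξ j : MvPolynomial κ R) = dividedDifference X ξ j j := by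
  simp only [rootedColourSum, mul_sum, map_sum, pderiv_X_mul_prod_X, dividedDifference,
    splitColourSum]
  rw [sum_comm]
  refine sum_congr rfl fun y _ => ?_
  rw [← sum_filter, filter_filter]
  refine sum_congr ?_ fun _ _ => rfl
  ext h
  simp only [mem_splitColourings_self, mem_filter, mem_univ, true_and, and_comm]

variable [LinearOrder κ] [CommRing R]

/-- The derivation along the vector field `x j * H j`, for `H` the rooted colour sums of `ξ`.
Integrating by parts along it removes the root from `colourSum X ξ`. -/
noncomputable def loopDerivation (κ R : Type*) [Fintype κ] [DecidableEq κ] [CommSemiring R]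
    (ξ : Perm (Option α)) : Derivation R (MvPolynomial κ R) (MvPolynomial κ R) :=
  mkDerivation R fun j => X j * rootedColourSum X ξ j

variable (κ R) in
/-- The Vandermonde determinant as a polynomial. -/
noncomputable def vandermondePolynomial : MvPolynomial κ R :=
  ∏ p : κ × κ with p.1 < p.2, (X p.2 - X p.1)

variable (κ R) in
/-- The polynomial part of the integrand of `Λ_{m,n}`, for `e = n - m`. -/
noncomputable def weightPolynomial (e : ℕ) : MvPolynomial κ R :=
  vandermondePolynomial κ R ^ 2 * ∏ k, X k ^ e

-- The two orientations of each pair make up `∑ j ≠ l` without appeal to the symmetry of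
-- `dividedDifference`.
theorem loopDerivation_vandermondePolynomial_sq (ξ : Perm (Option α)) :
    loopDerivation κ R ξ (vandermondePolynomial κ R ^ 2) = vandermondePolynomial κ R ^ 2 *
      (∑ p : κ × κ with p.1 < p.2, dividedDifference X ξ p.1 p.2 +
        ∑ p : κ × κ with p.1 < p.2, dividedDifference X ξ p.2 p.1) := by
  have map_vandermonde_fst_snd : loopDerivation κ R ξ (vandermondePolynomial κ R) =
      vandermondePolynomial κ R * ∑ p : κ × κ with p.1 < p.2, dividedDifference X ξ p.1 p.2 := by
    refine derivation_prod_eq_prod_mul_sum _ fun p _ => ?_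
    rw [map_sub, loopDerivation, mkDerivation_X, mkDerivation_X]
    linear_combination sub_mul_dividedDifference (X : κ → MvPolynomial κ R) ξ p.1 p.2
  have map_vandermonde_snd_fst : loopDerivation κ R ξ (vandermondePolynomial κ R) =
      vandermondePolynomial κ R * ∑ p : κ × κ with p.1 < p.2, dividedDifference X ξ p.2 p.1 := by
    refine derivation_prod_eq_prod_mul_sum _ fun p _ => ?_
    rw [map_sub, loopDerivation, mkDerivation_X, mkDerivation_X, sub_mul_dividedDifference]
  rw [sq, Derivation.leibniz, smul_eq_mul]
  nth_rewrite 1 [map_vandermonde_fst_snd]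
  rw [map_vandermonde_snd_fst]
  ring

theorem loopDerivation_prod_X_pow (ξ : Perm (Option α)) (e : ℕ) :
    loopDerivation κ R ξ (∏ k, X k ^ e) = (∏ k, X k ^ e) * e • ∑ c, rootedColourSum X ξ c := by
  rw [smul_sum]
  refine derivation_prod_eq_prod_mul_sum _ fun k _ => ?_
  rw [Derivation.leibniz_pow, loopDerivation, mkDerivation_X]
  cases e with
  | zero => simp
  | succ e =>
    simp only [smul_eq_mul, nsmul_eq_mul, Nat.add_sub_cancel]
    ring

theorem sum_pderiv_mul_weightPolynomial (ξ : Perm (Option α)) (e : ℕ) :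
    ∑ j, pderiv j (X j * (rootedColourSum X ξ j * weightPolynomial κ R e)) =
      (∑ j, ∑ l, dividedDifference X ξ j l + e • ∑ c, rootedColourSum X ξ c) *
        weightPolynomial κ R e := by
  have map_weight : loopDerivation κ R ξ (weightPolynomial κ R e) = _ :=
    Derivation.leibniz _ _ _
  have sum_pderiv : ∑ j, pderiv j (X j * (rootedColourSum X ξ j * weightPolynomial κ R e)) =
      (∑ j, dividedDifference X ξ j j) * weightPolynomial κ R e +
        loopDerivation κ R ξ (weightPolynomial κ R e) := by
    rw [loopDerivation, mkDerivation_apply_eq_sum, sum_mul, ← sum_add_distrib]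
    refine sum_congr rfl fun j _ => ?_
    rw [← mul_assoc, pderiv_mul, pderiv_X_mul_rootedColourSum]
  rw [sum_pderiv, map_weight, loopDerivation_vandermondePolynomial_sq, loopDerivation_prod_X_pow,
    sum_sum_eq_sum_diag_add_sum_lt, weightPolynomial, smul_eq_mul, smul_eq_mul]
  ring

theorem laguerreFunctional_colourSum_option (ξ : Perm (Option α)) (e : ℕ) :
    laguerreFunctional κ R (colourSum X ξ * weightPolynomial κ R e) =
      ∑ y, ((if y = none then Fintype.card κ else 1) *
        if ξ y = none then Fintype.card κ + e else 1) •
          laguerreFunctional κ R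
            (colourSum X (removeNone (ξ * swap none y)) * weightPolynomial κ R e) := by
  calc laguerreFunctional κ R (colourSum X ξ * weightPolynomial κ R e)
    _ = laguerreFunctional κ R
          (∑ j, pderiv j (X j * (rootedColourSum X ξ j * weightPolynomial κ R e))) := by
      simp only [map_sum, laguerreFunctional_pderiv_X_mul]
      rw [← map_sum, colourSum_option, sum_mul]
      simp only [mul_assoc]
    _ = _ := by
      rw [sum_pderiv_mul_weightPolynomial, sum_dividedDifference_add, sum_mul, map_sum]
      simp only [smul_mul_assoc, map_nsmul]

theorem laguerreFunctional_colourSum {ν : Type*} [Fintype ν] [DecidableEq ν] {e : ℕ}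
    (hν : Fintype.card ν = Fintype.card κ + e) (ξ : Perm α) :
    laguerreFunctional κ R (colourSum X ξ * weightPolynomial κ R e) =
      ladderCount κ ν ξ • laguerreFunctional κ R (weightPolynomial κ R e) := by
  revert ξ
  revert ‹DecidableEq α›
  refine Fintype.induction_empty_option (P := fun α _ => ∀ [DecidableEq α] (ξ : Perm α),
    laguerreFunctional κ R (colourSum X ξ * weightPolynomial κ R e) =
      ladderCount κ ν ξ • laguerreFunctional κ R (weightPolynomial κ R e)) ?_ ?_ ?_ α
  · intro α β _ equiv ih _ ξ
    let _ := Fintype.ofEquiv β equiv.symm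
    classical
    have h := ih (equiv.symm.permCongr ξ)
    rw [colourSum_permCongr, ladderCount_permCongr] at h
    convert h
  · intro _ ξ
    simp [colourSum, ladderCount, invariantColourings_of_isEmpty]
  · intro α _ ih inst ξ
    classical
    obtain rfl : inst = fun a b => Option.instDecidableEq a b := Subsingleton.elim _ _
    simp only [laguerreFunctional_colourSum_option, ih, ladderCount_option (κ := κ) (ν := ν), hν,
      sum_smul, smul_smul]

end LoopEquation

section Integral

open MvPolynomial

theorem integrableOn_pow_mul_exp_neg_Ici (a : ℕ) :
    IntegrableOn (fun x : ℝ => x ^ a * Real.exp (-x)) (Set.Ici 0) := by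
  have convergent := Real.GammaIntegral_convergent (s := a + 1) (by positivity)
  simp only [add_sub_cancel_right, Real.rpow_natCast, mul_comm] at convergent
  exact (integrableOn_Ici_iff_integrableOn_Ioi (by simp)).mpr convergent

theorem integral_Ici_pow_mul_exp_neg (a : ℕ) :
    ∫ x in Set.Ici (0 : ℝ), x ^ a * Real.exp (-x) = a.factorial := by
  rw [integral_Ici_eq_integral_Ioi, ← Real.Gamma_nat_eq_factorial,
    Real.Gamma_eq_integral (by positivity)]
  simp only [add_sub_cancel_right, Real.rpow_natCast, mul_comm]

section Polynomial

variable {σ : Type*} [Fintype σ]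

theorem eval_monomial_mul_prod_exp_neg (a : σ →₀ ℕ) (c : ℝ) (q : σ → ℝ) :
    eval q (monomial a c) * ∏ k, Real.exp (-q k) = c * ∏ k, (q k ^ a k * Real.exp (-q k)) := by
  rw [eval_monomial, prod_mul_distrib, Finsupp.prod_fintype _ _ (by simp), mul_assoc]

theorem integrable_eval_mul_prod_exp_neg (p : MvPolynomial σ ℝ) :
    Integrable (fun q : σ → ℝ => eval q p * ∏ k, Real.exp (-q k))
      (Measure.pi fun _ => volume.restrict (Set.Ici 0)) := by
  induction p using MvPolynomial.induction_on' with
  | monomial a c =>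
    simp only [eval_monomial_mul_prod_exp_neg]
    exact (Integrable.fintype_prod (f := fun k x => x ^ a k * Real.exp (-x)) fun k =>
      integrableOn_pow_mul_exp_neg_Ici (a k)).const_mul c
  | add p q hp hq =>
    simp only [map_add, add_mul]
    exact hp.add hq

theorem integral_eval_mul_prod_exp_neg (p : MvPolynomial σ ℝ) :
    ∫ q : σ → ℝ, eval q p * ∏ k, Real.exp (-q k) ∂Measure.pi
      (fun _ => volume.restrict (Set.Ici 0)) = laguerreFunctional σ ℝ p := by
  induction p using MvPolynomial.induction_on' with
  | monomial a c =>
    simp only [eval_monomial_mul_prod_exp_neg]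
    rw [integral_const_mul, laguerreFunctional_monomial,
      integral_fintype_prod_eq_prod (f := fun k x => x ^ a k * Real.exp (-x))]
    simp only [integral_Ici_pow_mul_exp_neg]
  | add p q hp hq =>
    simp only [map_add, add_mul]
    rw [integral_add (integrable_eval_mul_prod_exp_neg p) (integrable_eval_mul_prod_exp_neg q),
      hp, hq]

end Polynomial

theorem setIntegral_pos_of_mem_interior {E : Type*} [TopologicalSpace E] [MeasurableSpace E]
    {μ : Measure E} [μ.IsOpenPosMeasure] {f : E → ℝ} {s : Set E} (hf : Continuous f)
    (hs : MeasurableSet s) (hfi : IntegrableOn f s μ) (hf_nonneg : ∀ x ∈ s, 0 ≤ f x) {x : E}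
    (hx : x ∈ interior s) (hfx : f x ≠ 0) : 0 < ∫ x in s, f x ∂μ := by
  rw [setIntegral_pos_iff_support_of_nonneg_ae
    ((ae_restrict_mem hs).mono hf_nonneg) hfi]
  exact ((hf.isOpen_support.inter isOpen_interior).measure_pos μ ⟨x, hfx, hx⟩).trans_le
    (measure_mono (Set.inter_subset_inter_right _ interior_subset))

theorem orthant_eq_pi (m : ℕ) : orthant m = Set.univ.pi fun _ => Set.Ici 0 := by
  ext q
  simp [orthant, Pi.le_def]

theorem volume_restrict_orthant (m : ℕ) : volume.restrict (orthant m) =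
    Measure.pi fun _ : Fin m => (volume : Measure ℝ).restrict (Set.Ici 0) := by
  rw [orthant_eq_pi, volume_pi, Measure.restrict_pi_pi]

theorem eval_weightPolynomial_mul_prod_exp_neg {m : ℕ} (e : ℕ) (q : Fin m → ℝ) :
    eval q (weightPolynomial (Fin m) ℝ e) * ∏ k, Real.exp (-q k) =
      vandermonde q ^ 2 * ∏ k, (q k ^ e * Real.exp (-q k)) := by
  simp [weightPolynomial, vandermondePolynomial, vandermonde, prod_mul_distrib, mul_assoc]

theorem Lam_eq_laguerreFunctional (m n : ℕ) :
    Lam m n = laguerreFunctional (Fin m) ℝ (weightPolynomial (Fin m) ℝ (n - m)) := by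
  simp only [Lam, ← eval_weightPolynomial_mul_prod_exp_neg, volume_restrict_orthant,
    integral_eval_mul_prod_exp_neg]

theorem Lam_pos (m n : ℕ) : 0 < Lam m n := by
  refine setIntegral_pos_of_mem_interior (x := fun k => (k : ℝ) + 1) ?_ ?_ ?_ ?_ ?_ ?_
  · unfold vandermonde
    fun_prop
  · rw [orthant_eq_pi]
    exact MeasurableSet.univ_pi fun _ => measurableSet_Ici
  · simp only [← eval_weightPolynomial_mul_prod_exp_neg]
    rw [IntegrableOn, volume_restrict_orthant]
    exact integrable_eval_mul_prod_exp_neg _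
  · exact fun q hq => mul_nonneg (sq_nonneg _) (prod_nonneg fun k _ =>
      mul_nonneg (pow_nonneg (hq k) _) (Real.exp_nonneg _))
  · rw [orthant_eq_pi, mem_interior_iff_mem_nhds]
    exact set_pi_mem_nhds Set.finite_univ fun k _ => Ici_mem_nhds (by positivity)
  · have vandermonde_ne_zero : vandermonde (fun k : Fin m => (k : ℝ) + 1) ≠ 0 :=
      prod_ne_zero_iff.mpr fun p hp => by
        simpa [sub_eq_zero, Fin.val_inj] using (mem_filter.mp hp).2.ne'
    positivity

end Integral

section Orbits

variable {α κ R : Type*} [Fintype α] [DecidableEq α] [Fintype κ] [DecidableEq κ] [CommSemiring R]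

theorem apply_eq_of_sameCycle {α κ : Type*} {ξ : Perm α} {f : α → κ} (hf : f ∘ ξ = f) {a b : α}
    (hab : ξ.SameCycle a b) : f a = f b := by
  have apply_eq (x : α) : f (ξ x) = f x := congrFun hf x
  obtain ⟨n, rfl⟩ := hab
  induction n with
  | zero => rfl
  | succ n ih => rwa [add_comm, zpow_one_add, Perm.mul_apply, apply_eq]
  | pred n ih => rwa [← apply_eq ((ξ ^ _) a), ← Perm.mul_apply, ← zpow_one_add, add_sub_cancel]

theorem invariantColourings_eq_image {Q : Type*} [Fintype Q] [DecidableEq Q] {ξ : Perm α}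
    {π : α → Q} (hπ : π.Surjective) (hξ : ∀ a b, π a = π b ↔ ξ.SameCycle a b) :
    invariantColourings κ ξ = univ.image fun g : Q → κ => g ∘ π := by
  ext f
  simp only [mem_invariantColourings, mem_image, mem_univ, true_and]
  constructor
  · intro hf
    refine ⟨f ∘ Function.surjInv hπ, funext fun a => ?_⟩
    exact apply_eq_of_sameCycle hf ((hξ _ _).mp (Function.surjInv_eq hπ (π a)))
  · rintro ⟨g, rfl⟩
    exact funext fun a => congrArg g ((hξ _ _).mpr (Perm.sameCycle_apply_left.mpr (.refl ξ a)))

theorem colourSum_eq_prod_fibers {Q : Type*} [Fintype Q] [DecidableEq Q] (w : κ → R) {ξ : Perm α}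
    {π : α → Q} (hπ : π.Surjective) (hξ : ∀ a b, π a = π b ↔ ξ.SameCycle a b) :
    colourSum w ξ = ∏ i, ∑ c, w c ^ #{a | π a = i} := by
  have prod_comp (g : Q → κ) : ∏ a, w (g (π a)) = ∏ i, w (g i) ^ #{a | π a = i} := by
    simp only [← prod_fiberwise' univ π fun i => w (g i), prod_const]
  rw [colourSum, invariantColourings_eq_image hπ hξ,
    sum_image fun _ _ _ _ h => hπ.injective_comp_right h, Fintype.prod_sum]
  simp only [Function.comp_apply, prod_comp]

/-- Index type for the cycles of `ξ`, including those of length 1. -/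
abbrev CycleIndex (ξ : Perm α) : Type _ :=
  {c // c ∈ ξ.cycleFactorsFinset} ⊕ {a // ξ a = a}

/-- The index of the cycle through a point. -/
def cycleIndex (ξ : Perm α) (a : α) : CycleIndex ξ :=
  if h : ξ a = a then .inr ⟨a, h⟩
  else .inl ⟨ξ.cycleOf a, Perm.cycleOf_mem_cycleFactorsFinset_iff.mpr (Perm.mem_support.mpr h)⟩

theorem cycleIndex_eq_inl_iff {ξ : Perm α} {a : α} {c : {c // c ∈ ξ.cycleFactorsFinset}} :
    cycleIndex ξ a = .inl c ↔ a ∈ c.1.support := by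
  unfold cycleIndex
  split_ifs with h
  · refine iff_of_false id fun ha => ?_
    exact Perm.mem_support.mp (Perm.mem_cycleFactorsFinset_support_le c.2 ha) h
  · rw [Sum.inl_injective.eq_iff, Subtype.ext_iff]
    refine ⟨fun hc => ?_, fun ha => (Perm.cycle_is_cycleOf ha c.2).symm⟩
    rw [← hc, Perm.mem_support_cycleOf_iff]
    exact ⟨.refl ξ a, Perm.mem_support.mpr h⟩

theorem cycleIndex_eq_inr_iff {ξ : Perm α} {a : α} {b : {a // ξ a = a}} :
    cycleIndex ξ a = .inr b ↔ a = b := by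
  unfold cycleIndex
  split_ifs with h
  · rw [Sum.inr_injective.eq_iff, Subtype.ext_iff]
  · exact iff_of_false id fun hab => h (hab ▸ b.2)

theorem cycleIndex_surjective (ξ : Perm α) : (cycleIndex ξ).Surjective := by
  rintro (c | b)
  · obtain ⟨a, ha⟩ := (Perm.mem_cycleFactorsFinset_iff.mp c.2).1.nonempty_support
    exact ⟨a, cycleIndex_eq_inl_iff.mpr ha⟩
  · exact ⟨b, cycleIndex_eq_inr_iff.mpr rfl⟩

theorem cycleIndex_eq_iff_sameCycle {ξ : Perm α} {a b : α} :
    cycleIndex ξ a = cycleIndex ξ b ↔ ξ.SameCycle a b := by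
  rcases hb : cycleIndex ξ b with c | b'
  · rw [cycleIndex_eq_inl_iff] at hb ⊢
    rw [Perm.cycle_is_cycleOf hb c.2, Perm.mem_support_cycleOf_iff]
    exact ⟨fun h => h.1.symm, fun h => ⟨h.symm, Perm.mem_cycleFactorsFinset_support_le c.2 hb⟩⟩
  · rw [cycleIndex_eq_inr_iff] at hb ⊢
    subst hb
    exact ⟨fun h => h ▸ .refl ξ a, fun h => h.eq_of_right b'.2⟩

theorem colourSum_eq_prod_cycleType (w : κ → R) (ξ : Perm α) :
    colourSum w ξ = (ξ.cycleType.map fun t => ∑ c, w c ^ t).prod *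
      (∑ c, w c) ^ #{a | ξ a = a} := by
  rw [colourSum_eq_prod_fibers w (cycleIndex_surjective ξ) fun _ _ => cycleIndex_eq_iff_sameCycle,
    Fintype.prod_sum_type]
  congr 1
  · simp only [cycleIndex_eq_inl_iff, filter_univ_mem, Perm.cycleType_def, Multiset.map_map]
    exact prod_coe_sort ξ.cycleFactorsFinset fun c => ∑ j, w j ^ #c.support
  · simp [cycleIndex_eq_inr_iff, filter_eq', Fintype.card_subtype]

theorem colourSum_eq_prod_orbitSizes {r : ℕ} (w : κ → R) (ξ : Perm (Fin r)) :
    colourSum w ξ = ((orbitSizes ξ).map fun t => ∑ c, w c ^ t).prod := by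
  simp [colourSum_eq_prod_cycleType, orbitSizes]

theorem card_invariantColourings_eq_pow_cyc {r : ℕ} (ξ : Perm (Fin r)) :
    (invariantColourings κ ξ).card = Fintype.card κ ^ cyc ξ := by
  have colourSum_eq := colourSum_eq_prod_orbitSizes (1 : κ → ℕ) ξ
  simpa [colourSum_one, orbitSizes, cyc, pow_add] using colourSum_eq

end Orbits

theorem ladderCount_eq_sum_pow_cyc {r : ℕ} (κ ν : Type*) [Fintype κ] [DecidableEq κ] [Fintype ν]
    [DecidableEq ν] (ξ : Perm (Fin r)) :
    ladderCount κ ν ξ = ∑ η, Fintype.card κ ^ cyc η * Fintype.card ν ^ cyc (ξ * η) := by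
  simp only [ladderCount, card_invariantColourings_eq_pow_cyc]

theorem integral_orthant_prod_powerSums {r m : ℕ} (e : ℕ) (ξ : Perm (Fin r)) :
    ∫ q in orthant m, vandermonde q ^ 2 * (∏ k, (q k ^ e * Real.exp (-q k))) *
      ((orbitSizes ξ).map fun t => ∑ j, q j ^ t).prod =
      laguerreFunctional (Fin m) ℝ
        (colourSum MvPolynomial.X ξ * weightPolynomial (Fin m) ℝ e) := by
  rw [← integral_eval_mul_prod_exp_neg, ← volume_restrict_orthant]
  refine integral_congr_ae (.of_forall fun q => ?_)
  have eval_colourSum : MvPolynomial.eval q (colourSum MvPolynomial.X ξ) = colourSum q ξ := by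
    rw [map_colourSum]
    exact congrArg (colourSum · ξ) (funext fun j => MvPolynomial.eval_X j)
  simp only [← eval_weightPolynomial_mul_prod_exp_neg, ← colourSum_eq_prod_orbitSizes, map_mul,
    eval_colourSum]
  ring

/-- The matrix-integral expression for `P_{r_1…r_N}(m,n) = Σ_η m^{cyc η} n^{cyc (ξη)}`,
where `r_1,…,r_N` are the orbit sizes of `ξ`. -/
theorem ladderSum_eq_integral (r : ℕ) (hr : 1 ≤ r) (m n : ℕ) (hm : 0 < m) (hn : 0 < n)
    (hmn : m ≤ n) (ξ : Equiv.Perm (Fin r)) :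
    ((∑ η : Equiv.Perm (Fin r), (m : ℝ) ^ cyc η * (n : ℝ) ^ cyc (ξ * η)) : ℝ) =
      (1 / Lam m n) *
        ∫ q in orthant m, (vandermonde q) ^ 2 *
          (∏ k : Fin m, (q k ^ (n - m) * Real.exp (-(q k)))) *
          ((orbitSizes ξ).map fun t => ∑ j : Fin m, q j ^ t).prod := by
  have ladderSum_eq : ∑ η, (m : ℝ) ^ cyc η * (n : ℝ) ^ cyc (ξ * η) =
      ladderCount (Fin m) (Fin n) ξ := by
    simp [ladderCount_eq_sum_pow_cyc]
  have card_eq : Fintype.card (Fin n) = Fintype.card (Fin m) + (n - m) := by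
    simp [hmn]
  rw [ladderSum_eq, integral_orthant_prod_powerSums, laguerreFunctional_colourSum card_eq,
    ← Lam_eq_laguerreFunctional, nsmul_eq_mul]
  field_simp [(Lam_pos m n).ne']
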